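/- arXiv:2011.01199 — 2 statements merged into one kernel-verified Lean document; each statement's English description precedes it below -/
import Mathlib

section
/- Let β ∈ [3/4, 1) and x > 0. Then lim_{d→∞} (1/(d ln d)) Σ_{j=3}^{⌊dx⌋} Σ_{k=1}^{j−2} (k/j)^{2β−3/2} a_{3/2}(j−k)² = 9x/64. -/
/-!
Write `a(m)` for `a_{3/2}(m)` and `p = 2β − 3/2`. As a second difference of `|·|^{3/2}`,
`a(m) ~ (3/8) m^{−1/2}`, so `m a(m)² → c` with `c = (3/8)² = 9/64`, and the unweighted inner sum
`Σ_k a(j−k)²` is `c` times a harmonic sum, hence `~ c ln j`. The weight `(k/j)^p` changes it only by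
`O(1)`: since `|t^p − 1| ≤ (1 + |p|)(1 − t)(1 + t^p)`, the factor `1 − k/j = (j − k)/j` absorbs
`a(j−k)² = O(1/(j−k))`, and what remains is a Riemann sum of `1 + t^p`, bounded as soon as `p > −1`.
Summing `c ln j` over `j ≤ n` gives `c ln n! ~ c n ln n`, and `n = ⌊dx⌋` turns this into
`c x d ln d`.
-/

open Filter

/-- For `m ∈ ℤ`, `a_{3/2}(m) = (1/2)(|m+1|^{3/2} + |m−1|^{3/2} − 2|m|^{3/2})`. -/
noncomputable def aFun (α : ℝ) (m : ℤ) : ℝ :=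
  (|(m : ℝ) + 1| ^ α + |(m : ℝ) - 1| ^ α - 2 * |(m : ℝ)| ^ α) / 2

open Asymptotics
open scoped Topology

lemma tendsto_symmetric_second_difference {f f' : ℝ → ℝ} {f'' x : ℝ}
    (hf : ∀ᶠ y in 𝓝 x, HasDerivAt f (f' y) y) (hf' : HasDerivAt f' f'' x) :
    Tendsto (fun h ↦ (f (x + h) + f (x - h) - 2 * f x) / h ^ 2) (𝓝[≠] 0) (𝓝 f'') := by
  have hadd : Tendsto (fun h ↦ x + h) (𝓝 0) (𝓝 x) := by
    simpa using tendsto_const_nhds (x := x).add (tendsto_id (x := 𝓝 (0 : ℝ)))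
  have hsub : Tendsto (fun h ↦ x - h) (𝓝 0) (𝓝 x) := by
    simpa using tendsto_const_nhds (x := x).sub (tendsto_id (x := 𝓝 (0 : ℝ)))
  have hnum : ∀ᶠ h in 𝓝 0, HasDerivAt (fun h ↦ f (x + h) + f (x - h) - 2 * f x)
      (f' (x + h) - f' (x - h)) h := by
    filter_upwards [hadd.eventually hf, hsub.eventually hf] with h hp hm
    simpa [sub_eq_add_neg] using
      ((hp.comp_const_add x h).add (hm.comp_const_sub x h)).sub_const (2 * f x)
  have hden (h : ℝ) : HasDerivAt (fun h ↦ h ^ 2) (2 * h) h := by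
    simpa using hasDerivAt_pow 2 h
  have hratio : Tendsto (fun h ↦ (f' (x + h) - f' (x - h)) / (2 * h)) (𝓝[≠] 0) (𝓝 f'') := by
    have hderiv : HasDerivAt (fun h ↦ f' (x + h) - f' (x - h)) (2 * f'') 0 := by
      have hp : HasDerivAt (fun h ↦ f' (x + h)) f'' 0 :=
        HasDerivAt.comp_const_add x 0 (by simpa using hf')
      have hm : HasDerivAt (fun h ↦ f' (x - h)) (-f'') 0 :=
        HasDerivAt.comp_const_sub x 0 (by simpa using hf')
      exact (hp.sub hm).congr_deriv (by ring)
    have hslope := hderiv.tendsto_slope_zero.div_const 2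
    simpa [div_eq_inv_mul, mul_assoc, mul_left_comm] using hslope
  refine HasDerivAt.lhopital_zero_nhdsNE (hnum.filter_mono nhdsWithin_le_nhds)
    (.of_forall hden) ?_ ?_ ?_ hratio
  · filter_upwards [self_mem_nhdsWithin] with h hh
    exact mul_ne_zero two_ne_zero hh
  · have := hnum.self_of_nhds.continuousAt.tendsto
    simp only [add_zero, sub_zero, ← two_mul, sub_self] at this
    exact this.mono_left nhdsWithin_le_nhds
  · simpa using (hden 0).continuousAt.tendsto.mono_left nhdsWithin_le_nhds

lemma aFun_natCast_eq (α : ℝ) {m : ℕ} (hm : 1 ≤ m) :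
    aFun α m = (m : ℝ) ^ α * ((1 + (m : ℝ)⁻¹) ^ α + (1 - (m : ℝ)⁻¹) ^ α - 2) / 2 := by
  have hm0 : (0 : ℝ) < m := by positivity
  have hm1 : (m : ℝ)⁻¹ ≤ 1 := Nat.cast_inv_le_one m
  have hadd : (m : ℝ) + 1 = m * (1 + (m : ℝ)⁻¹) := by field_simp
  have hsub : (m : ℝ) - 1 = m * (1 - (m : ℝ)⁻¹) := by field_simp
  rw [aFun, Int.cast_natCast, hadd, hsub, abs_of_nonneg (by positivity),
    abs_of_nonneg (mul_nonneg hm0.le (by linarith)), abs_of_pos hm0,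
    Real.mul_rpow hm0.le (by positivity), Real.mul_rpow hm0.le (by linarith)]
  ring

lemma tendsto_aFun_div_rpow (α : ℝ) :
    Tendsto (fun m : ℕ ↦ aFun α m / (m : ℝ) ^ (α - 2)) atTop (𝓝 (α * (α - 1) / 2)) := by
  have hderiv : ∀ᶠ y : ℝ in 𝓝 1, HasDerivAt (fun y ↦ y ^ α) (α * y ^ (α - 1)) y := by
    filter_upwards [eventually_ne_nhds one_ne_zero] with y hy
    exact Real.hasDerivAt_rpow_const (.inl hy)
  have hderiv₂ : HasDerivAt (fun y : ℝ ↦ α * y ^ (α - 1)) (α * (α - 1)) 1 := by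
    simpa using (Real.hasDerivAt_rpow_const (p := α - 1) (.inl one_ne_zero)).const_mul α
  have hinv : Tendsto (fun m : ℕ ↦ (m : ℝ)⁻¹) atTop (𝓝[≠] 0) :=
    tendsto_nhdsWithin_iff.2 ⟨tendsto_inv_atTop_nhds_zero_nat, by
      filter_upwards [eventually_ge_atTop 1] with m hm
      exact inv_ne_zero (by positivity)⟩
  refine (((tendsto_symmetric_second_difference hderiv hderiv₂).comp hinv).div_const 2).congr' ?_
  filter_upwards [eventually_ge_atTop 1] with m hm
  have hm0 : (0 : ℝ) < m := by positivity
  rw [aFun_natCast_eq α hm, Real.rpow_sub hm0, Real.rpow_two]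
  simp only [Function.comp_apply, Real.one_rpow]
  field_simp

lemma tendsto_mul_aFun_three_halves_sq :
    Tendsto (fun m : ℕ ↦ (m : ℝ) * aFun (3 / 2) m ^ 2) atTop (𝓝 (9 / 64)) := by
  have h := (tendsto_aFun_div_rpow (3 / 2)).pow 2
  norm_num only at h
  refine h.congr' ?_
  filter_upwards [eventually_ge_atTop 1] with m hm
  have hm0 : (0 : ℝ) < m := by positivity
  rw [div_pow, ← Real.rpow_mul_natCast hm0.le, div_eq_mul_inv, ← Real.rpow_neg hm0.le, mul_comm]
  norm_num

lemma one_sub_rpow_le {t q : ℝ} (ht₀ : 0 < t) (ht₁ : t ≤ 1) (hq : 0 ≤ q) :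
    1 - t ^ q ≤ (1 + q) * (1 - t) := by
  have bernoulli : 1 + (q + 1) * (t - 1) ≤ t ^ (q + 1) := by
    simpa using one_add_mul_self_le_rpow_one_add (s := t - 1) (p := q + 1) (by linarith)
      (by linarith)
  have hmono : t ^ (q + 1) ≤ t ^ q :=
    Real.rpow_le_rpow_of_exponent_ge ht₀ ht₁ (by linarith)
  linarith

lemma abs_rpow_sub_one_le {t : ℝ} (ht₀ : 0 < t) (ht₁ : t ≤ 1) (p : ℝ) :
    |t ^ p - 1| ≤ (1 + |p|) * (1 - t) * (1 + t ^ p) := by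
  have htp : 0 < t ^ p := Real.rpow_pos_of_pos ht₀ p
  have hprod : 0 ≤ (1 + |p|) * (1 - t) := mul_nonneg (by positivity) (by linarith)
  rcases le_total 0 p with hp | hp
  · have hle : t ^ p ≤ 1 := Real.rpow_le_one ht₀.le ht₁ hp
    rw [abs_of_nonneg hp] at hprod ⊢
    rw [abs_of_nonpos (by linarith)]
    calc -(t ^ p - 1) = 1 - t ^ p := neg_sub _ _
      _ ≤ (1 + p) * (1 - t) := one_sub_rpow_le ht₀ ht₁ hp
      _ ≤ (1 + p) * (1 - t) * (1 + t ^ p) := le_mul_of_one_le_right hprod (by linarith)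
  · have hge : 1 ≤ t ^ p := Real.one_le_rpow_of_pos_of_le_one_of_nonpos ht₀ ht₁ hp
    rw [abs_of_nonpos hp] at hprod ⊢
    rw [abs_of_nonneg (by linarith)]
    calc t ^ p - 1 = t ^ p * (1 - t ^ (-p)) := by
          rw [mul_sub, ← Real.rpow_add ht₀, add_neg_cancel, Real.rpow_zero, mul_one]
      _ ≤ t ^ p * ((1 + -p) * (1 - t)) := by
          gcongr
          exact one_sub_rpow_le ht₀ ht₁ (by linarith)
      _ ≤ (1 + -p) * (1 - t) * (1 + t ^ p) := by linarith

lemma mul_rpow_le_rpow_sub_rpow {q : ℝ} (hq₀ : 0 ≤ q) (hq₁ : q ≤ 1) (n : ℕ) :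
    q * ((n + 1 : ℕ) : ℝ) ^ (q - 1) ≤ ((n + 1 : ℕ) : ℝ) ^ q - (n : ℝ) ^ q := by
  have hn : (0 : ℝ) < (n + 1 : ℕ) := by positivity
  have hinv : ((n + 1 : ℕ) : ℝ)⁻¹ ≤ 1 := Nat.cast_inv_le_one _
  have bernoulli := rpow_one_add_le_one_add_mul_self (s := -((n + 1 : ℕ) : ℝ)⁻¹)
    (by linarith) hq₀ hq₁
  have hfactor : (n : ℝ) = (n + 1 : ℕ) * (1 + -((n + 1 : ℕ) : ℝ)⁻¹) := by
    push_cast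
    field_simp
    ring
  have hle : (n : ℝ) ^ q ≤ ((n + 1 : ℕ) : ℝ) ^ q * (1 + q * -((n + 1 : ℕ) : ℝ)⁻¹) := by
    conv_lhs => rw [hfactor, Real.mul_rpow hn.le (by linarith)]
    gcongr
  rw [Real.rpow_sub_one hn.ne', div_eq_mul_inv]
  linarith

lemma mul_sum_Icc_rpow_le {q : ℝ} (hq₀ : 0 < q) (hq₁ : q ≤ 1) (n : ℕ) :
    q * ∑ k ∈ Finset.Icc 1 n, (k : ℝ) ^ (q - 1) ≤ (n : ℝ) ^ q := by
  induction n with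
  | zero => simp [Real.zero_rpow hq₀.ne']
  | succ n ih =>
    rw [Finset.sum_Icc_succ_top (by omega), mul_add]
    linarith [mul_rpow_le_rpow_sub_rpow hq₀.le hq₁ n]

lemma exists_sum_Icc_div_rpow_le {p : ℝ} (hp : -1 < p) :
    ∃ C, ∀ n : ℕ, ∑ k ∈ Finset.Icc 1 n, ((k : ℝ) / n) ^ p ≤ C * n := by
  set q := min p 0 + 1 with hq
  have hq₀ : 0 < q := by
    have : -1 < min p 0 := lt_min hp (by norm_num)
    linarith
  have hq₁ : q ≤ 1 := by linarith [min_le_right p 0]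
  refine ⟨q⁻¹, fun n ↦ ?_⟩
  rcases n.eq_zero_or_pos with rfl | hn
  · simp
  have hn₀ : (0 : ℝ) < n := by positivity
  calc ∑ k ∈ Finset.Icc 1 n, ((k : ℝ) / n) ^ p
      ≤ ∑ k ∈ Finset.Icc 1 n, ((k : ℝ) / n) ^ (q - 1) := by
        refine Finset.sum_le_sum fun k hk ↦ ?_
        obtain ⟨hk₁, hkn⟩ := Finset.mem_Icc.1 hk
        refine Real.rpow_le_rpow_of_exponent_ge (by positivity) ?_ (by simp [hq])
        exact div_le_one_of_le₀ (by exact_mod_cast hkn) hn₀.le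
    _ = (∑ k ∈ Finset.Icc 1 n, (k : ℝ) ^ (q - 1)) / (n : ℝ) ^ (q - 1) := by
        simp only [Real.div_rpow (Nat.cast_nonneg _) hn₀.le, Finset.sum_div]
    _ ≤ q⁻¹ * (n : ℝ) ^ q / (n : ℝ) ^ (q - 1) := by
        gcongr
        rw [le_inv_mul_iff₀ hq₀]
        exact mul_sum_Icc_rpow_le hq₀ hq₁ n
    _ = q⁻¹ * n := by
        rw [Real.rpow_sub_one hn₀.ne']
        field_simp

lemma tendsto_sum_range_inv_atTop :
    Tendsto (fun n ↦ ∑ i ∈ Finset.range n, (i : ℝ)⁻¹) atTop atTop :=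
  (not_summable_iff_tendsto_nat_atTop_of_nonneg fun _ ↦ by positivity).1
    Real.not_summable_natCast_inv

lemma tendsto_sum_range_inv_sub_log :
    Tendsto (fun n : ℕ ↦ ∑ i ∈ Finset.range n, (i : ℝ)⁻¹ - Real.log n) atTop
      (𝓝 Real.eulerMascheroniConstant) := by
  refine (tendsto_add_atTop_iff_nat 1).1 (Real.tendsto_eulerMascheroniSeq.congr fun n ↦ ?_)
  rw [Real.eulerMascheroniSeq, Finset.sum_range_succ']
  simp [harmonic]

lemma isLittleO_one_log_natCast :
    (fun _ : ℕ ↦ (1 : ℝ)) =o[atTop] fun n : ℕ ↦ Real.log n :=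
  Real.isLittleO_const_log_atTop.comp_tendsto tendsto_natCast_atTop_atTop

lemma isLittleO_sub_mul_natCast_inv {b : ℕ → ℝ} {c : ℝ}
    (hb : Tendsto (fun m : ℕ ↦ (m : ℝ) * b m) atTop (𝓝 c)) :
    (fun m : ℕ ↦ b m - c * (m : ℝ)⁻¹) =o[atTop] fun m : ℕ ↦ (m : ℝ)⁻¹ := by
  have hne : ∀ᶠ m : ℕ in atTop, (m : ℝ) ≠ 0 := by
    filter_upwards [eventually_ge_atTop 1] with m hm
    positivity
  rw [isLittleO_iff_tendsto' (hne.mono fun m hm h ↦ absurd h (inv_ne_zero hm))]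
  refine (tendsto_sub_nhds_zero_iff.2 hb).congr' ?_
  filter_upwards [hne] with m hm
  field_simp

lemma isLittleO_sum_range_sub_log {b : ℕ → ℝ} {c : ℝ}
    (hb : Tendsto (fun m : ℕ ↦ (m : ℝ) * b m) atTop (𝓝 c)) :
    (fun n ↦ ∑ i ∈ Finset.range n, b i - c * Real.log n) =o[atTop] fun n : ℕ ↦ Real.log n := by
  have hharm : (fun n : ℕ ↦ ∑ i ∈ Finset.range n, (i : ℝ)⁻¹ - Real.log n) =o[atTop]
      fun n : ℕ ↦ Real.log n :=
    (tendsto_sum_range_inv_sub_log.isBigO_one ℝ).trans_isLittleO isLittleO_one_log_natCast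
  have hequiv : (fun n : ℕ ↦ ∑ i ∈ Finset.range n, (i : ℝ)⁻¹) ~[atTop] fun n : ℕ ↦ Real.log n :=
    hharm
  have hsum := (isLittleO_sub_mul_natCast_inv hb).sum_range (fun _ ↦ by positivity)
    tendsto_sum_range_inv_atTop
  refine ((hsum.trans_isBigO hequiv.isBigO).add (hharm.const_mul_left c)).congr_left fun n ↦ ?_
  rw [Finset.sum_sub_distrib, ← Finset.mul_sum]
  ring

lemma sum_range_succ_log (n : ℕ) :
    ∑ i ∈ Finset.range (n + 1), Real.log i = Real.log n.factorial := by
  rw [← Finset.prod_range_add_one_eq_factorial, Finset.sum_range_succ', Nat.cast_prod,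
    Real.log_prod fun i _ ↦ by positivity]
  simp

lemma log_factorial_isEquivalent :
    (fun n : ℕ ↦ Real.log n.factorial) ~[atTop] fun n ↦ n * Real.log n := by
  have hbound : (fun n : ℕ ↦ Real.log n.factorial - n * Real.log n) =O[atTop]
      fun n : ℕ ↦ (n : ℝ) := by
    refine .of_bound 1 ?_
    filter_upwards [eventually_ge_atTop 1] with n hn
    have hupper : Real.log n.factorial ≤ n * Real.log n := by
      rw [← Real.log_pow]
      exact Real.log_le_log (by positivity) (by exact_mod_cast n.factorial_le_pow)
    have hlower := Stirling.le_log_factorial_stirling (n := n) (by omega)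
    have hlog : 0 ≤ Real.log n := Real.log_natCast_nonneg n
    have hpi : 0 ≤ Real.log (2 * Real.pi) := Real.log_nonneg (by linarith [Real.pi_gt_three])
    rw [one_mul, Real.norm_natCast, Real.norm_of_nonpos (by linarith)]
    linarith
  refine hbound.trans_isLittleO ?_
  simpa using (isBigO_refl (fun n : ℕ ↦ (n : ℝ)) atTop).mul_isLittleO isLittleO_one_log_natCast

lemma isLittleO_sum_range_succ_sub_mul_log {S : ℕ → ℝ} {c : ℝ}
    (hS : (fun j ↦ S j - c * Real.log j) =o[atTop] fun j : ℕ ↦ Real.log j) :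
    (fun n ↦ ∑ j ∈ Finset.range (n + 1), S j - c * (n * Real.log n)) =o[atTop]
      fun n : ℕ ↦ n * Real.log n := by
  have hdiv : Tendsto (fun n ↦ ∑ j ∈ Finset.range n, Real.log j) atTop atTop := by
    rw [← tendsto_add_atTop_iff_nat 1]
    simp only [sum_range_succ_log]
    exact (Real.tendsto_log_atTop.comp tendsto_natCast_atTop_atTop).comp
      (tendsto_atTop_mono Nat.self_le_factorial tendsto_id)
  have hsum := (hS.sum_range (fun j ↦ Real.log_natCast_nonneg j) hdiv).comp_tendsto
    (tendsto_add_atTop_nat 1)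
  simp only [Function.comp_def, sum_range_succ_log, Finset.sum_sub_distrib,
    ← Finset.mul_sum] at hsum
  have hfac := log_factorial_isEquivalent
  refine ((hsum.trans_isBigO hfac.isBigO).add (hfac.isLittleO.const_mul_left c)).congr_left
    fun n ↦ ?_
  simp only [Pi.sub_apply]
  ring

lemma natFloor_mul_log_natFloor_isEquivalent {x : ℝ} (hx : 0 < x) :
    (fun d : ℝ ↦ (⌊d * x⌋₊ : ℝ) * Real.log ⌊d * x⌋₊) ~[atTop] fun d ↦ d * x * Real.log d := by
  have htop : Tendsto (fun d : ℝ ↦ d * x) atTop atTop := tendsto_id.atTop_mul_const hx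
  have hfloor : (fun d : ℝ ↦ (⌊d * x⌋₊ : ℝ)) ~[atTop] fun d ↦ d * x :=
    isEquivalent_nat_floor.comp_tendsto htop
  have hlog : (fun d : ℝ ↦ Real.log (d * x)) ~[atTop] Real.log := by
    have hsplit : (fun d : ℝ ↦ Real.log d + Real.log x) ~[atTop] Real.log :=
      IsEquivalent.refl.add_isLittleO Real.isLittleO_const_log_atTop
    refine hsplit.congr_left ?_
    filter_upwards [eventually_gt_atTop 0] with d hd
    rw [Real.log_mul hd.ne' hx.ne']
  exact hfloor.mul ((hfloor.log htop).trans hlog)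

lemma tendsto_comp_natFloor_mul_div_mul_log {T : ℕ → ℝ} {c x : ℝ} (hx : 0 < x)
    (hT : (fun n ↦ T n - c * (n * Real.log n)) =o[atTop] fun n : ℕ ↦ n * Real.log n) :
    Tendsto (fun d : ℝ ↦ 1 / (d * Real.log d) * T ⌊d * x⌋₊) atTop (𝓝 (c * x)) := by
  have htop : Tendsto (fun d : ℝ ↦ ⌊d * x⌋₊) atTop atTop :=
    tendsto_nat_floor_atTop.comp (tendsto_id.atTop_mul_const hx)
  have hfloor := natFloor_mul_log_natFloor_isEquivalent hx
  have hscale : (fun d : ℝ ↦ d * x * Real.log d) =O[atTop] fun d ↦ d * Real.log d :=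
    ((isBigO_refl _ _).const_mul_left x).congr_left fun d ↦ by ring
  have hsub : (fun d : ℝ ↦ T ⌊d * x⌋₊ - c * x * (d * Real.log d)) =o[atTop]
      fun d ↦ d * Real.log d := by
    refine ((((hT.comp_tendsto htop).trans_isBigO hfloor.isBigO).add
      (hfloor.isLittleO.const_mul_left c)).trans_isBigO hscale).congr_left fun d ↦ ?_
    simp only [Function.comp_apply, Pi.sub_apply]
    ring
  have hlim := hsub.tendsto_div_nhds_zero.add_const (c * x)
  rw [zero_add] at hlim
  refine hlim.congr' ?_
  filter_upwards [eventually_gt_atTop 1] with d hd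
  have hlog : 0 < Real.log d := Real.log_pos hd
  field_simp
  ring

/-- The `j`-th inner sum of the double sum, with an arbitrary kernel `b` in place of `a_{3/2}²` and
an arbitrary exponent `p` in place of `2β − 3/2`. Truncated subtraction makes it empty for
`j ≤ 2`. -/
noncomputable def rowSum (p : ℝ) (b : ℤ → ℝ) (j : ℕ) : ℝ :=
  ∑ k ∈ Finset.Icc 1 (j - 2), ((k : ℝ) / j) ^ p * b (j - k)

section RowSum

variable {b : ℤ → ℝ} {c p : ℝ}

lemma rowSum_of_le_two (p : ℝ) (b : ℤ → ℝ) {j : ℕ} (hj : j ≤ 2) : rowSum p b j = 0 := by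
  simp [rowSum, Nat.sub_eq_zero_of_le hj]

lemma sum_Icc_three_rowSum (p : ℝ) (b : ℤ → ℝ) (n : ℕ) :
    ∑ j ∈ Finset.Icc 3 n, rowSum p b j = ∑ j ∈ Finset.range (n + 1), rowSum p b j := by
  refine Finset.sum_subset (fun j hj ↦ ?_) fun j hj hj₃ ↦ rowSum_of_le_two p b ?_
  · simp only [Finset.mem_Icc, Finset.mem_range] at hj ⊢
    omega
  · simp only [Finset.mem_Icc, Finset.mem_range] at hj hj₃
    omega

lemma rowSum_zero_eq_sum_Ico (b : ℤ → ℝ) (j : ℕ) :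
    rowSum 0 b j = ∑ i ∈ Finset.Ico 2 j, b i := by
  simp only [rowSum, Real.rpow_zero, one_mul]
  refine Finset.sum_nbij' (fun k ↦ j - k) (fun i ↦ j - i) ?_ ?_ ?_ ?_ ?_ <;>
    intro k hk <;> simp only [Finset.mem_Icc, Finset.mem_Ico] at hk ⊢
  iterate 4 omega
  rw [Nat.cast_sub (by omega)]

lemma isLittleO_rowSum_zero_sub_log (hb : Tendsto (fun m : ℕ ↦ (m : ℝ) * b m) atTop (𝓝 c)) :
    (fun j ↦ rowSum 0 b j - c * Real.log j) =o[atTop] fun j : ℕ ↦ Real.log j := by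
  have hconst : (fun _ : ℕ ↦ b 0 + b 1) =o[atTop] fun j : ℕ ↦ Real.log j :=
    (isBigO_const_const _ one_ne_zero _).trans_isLittleO isLittleO_one_log_natCast
  refine ((isLittleO_sum_range_sub_log hb).sub hconst).congr' ?_ .rfl
  filter_upwards [eventually_ge_atTop 2] with j hj
  rw [rowSum_zero_eq_sum_Ico, ← Finset.sum_range_add_sum_Ico (fun i : ℕ ↦ b i) hj]
  simp only [Finset.sum_range_succ, Finset.sum_range_zero, Nat.cast_zero, Nat.cast_one]
  ring

lemma abs_weight_sub_one_mul_kernel_le {M : ℝ} (hM : ∀ m : ℕ, |(m : ℝ) * b m| ≤ M) (p : ℝ) {j k : ℕ}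
    (hk : 0 < k) (hkj : k ≤ j) :
    |(((k : ℝ) / j) ^ p - 1) * b (j - k)| ≤ (1 + |p|) * M / j * (1 + ((k : ℝ) / j) ^ p) := by
  have hj : (0 : ℝ) < j := by exact_mod_cast hk.trans_le hkj
  have ht₁ : (k : ℝ) / j ≤ 1 := div_le_one_of_le₀ (by exact_mod_cast hkj) hj.le
  have : 0 ≤ 1 - (k : ℝ) / j := by linarith
  have hkernel : (1 - (k : ℝ) / j) * |b (j - k)| ≤ M / j := by
    have h := hM (j - k)
    rw [abs_mul, Nat.abs_cast, Nat.cast_sub hkj, Nat.cast_sub hkj] at h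
    rw [one_sub_div hj.ne', div_mul_eq_mul_div]
    gcongr
  calc |(((k : ℝ) / j) ^ p - 1) * b (j - k)|
      = |((k : ℝ) / j) ^ p - 1| * |b (j - k)| := abs_mul _ _
    _ ≤ (1 + |p|) * (1 - (k : ℝ) / j) * (1 + ((k : ℝ) / j) ^ p) * |b (j - k)| := by
        gcongr
        exact abs_rpow_sub_one_le (by positivity) ht₁ p
    _ = (1 + |p|) * (1 + ((k : ℝ) / j) ^ p) * ((1 - (k : ℝ) / j) * |b (j - k)|) := by ring
    _ ≤ (1 + |p|) * (1 + ((k : ℝ) / j) ^ p) * (M / j) := by gcongr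
    _ = (1 + |p|) * M / j * (1 + ((k : ℝ) / j) ^ p) := by ring

lemma isBigO_rowSum_sub_rowSum_zero (hb : Tendsto (fun m : ℕ ↦ (m : ℝ) * b m) atTop (𝓝 c))
    (hp : -1 < p) :
    (fun j ↦ rowSum p b j - rowSum 0 b j) =O[atTop] fun _ ↦ (1 : ℝ) := by
  obtain ⟨M, hM⟩ := hb.abs.bddAbove_range
  replace hM (m : ℕ) : |(m : ℝ) * b m| ≤ M := hM ⟨m, rfl⟩
  have hM₀ : 0 ≤ M := (abs_nonneg _).trans (hM 0)
  obtain ⟨C, hC⟩ := exists_sum_Icc_div_rpow_le hp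
  refine .of_bound ((1 + |p|) * M * (1 + C)) ?_
  filter_upwards [eventually_ge_atTop 1] with j hj
  have : (0 : ℝ) < j := by positivity
  have hdiff : rowSum p b j - rowSum 0 b j =
      ∑ k ∈ Finset.Icc 1 (j - 2), (((k : ℝ) / j) ^ p - 1) * b (j - k) := by
    simp only [rowSum, Real.rpow_zero, ← Finset.sum_sub_distrib, sub_mul]
  rw [norm_one, mul_one, Real.norm_eq_abs, hdiff]
  calc |∑ k ∈ Finset.Icc 1 (j - 2), (((k : ℝ) / j) ^ p - 1) * b (j - k)|
      ≤ ∑ k ∈ Finset.Icc 1 (j - 2), |(((k : ℝ) / j) ^ p - 1) * b (j - k)| :=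
        Finset.abs_sum_le_sum_abs _ _
    _ ≤ ∑ k ∈ Finset.Icc 1 (j - 2), (1 + |p|) * M / j * (1 + ((k : ℝ) / j) ^ p) := by
        refine Finset.sum_le_sum fun k hk ↦ ?_
        rw [Finset.mem_Icc] at hk
        exact abs_weight_sub_one_mul_kernel_le hM p (by omega) (by omega)
    _ ≤ ∑ k ∈ Finset.Icc 1 j, (1 + |p|) * M / j * (1 + ((k : ℝ) / j) ^ p) :=
        Finset.sum_le_sum_of_subset_of_nonneg (Finset.Icc_subset_Icc_right (j.sub_le 2))
          fun _ _ _ ↦ by positivity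
    _ = (1 + |p|) * M / j * (j + ∑ k ∈ Finset.Icc 1 j, ((k : ℝ) / j) ^ p) := by
        simp [← Finset.mul_sum, Finset.sum_add_distrib]
    _ ≤ (1 + |p|) * M / j * (j + C * j) := by
        gcongr
        exact hC j
    _ = (1 + |p|) * M * (1 + C) := by field_simp

lemma isLittleO_rowSum_sub_log (hb : Tendsto (fun m : ℕ ↦ (m : ℝ) * b m) atTop (𝓝 c))
    (hp : -1 < p) :
    (fun j ↦ rowSum p b j - c * Real.log j) =o[atTop] fun j : ℕ ↦ Real.log j :=
  (((isBigO_rowSum_sub_rowSum_zero hb hp).trans_isLittleO isLittleO_one_log_natCast).add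
    (isLittleO_rowSum_zero_sub_log hb)).congr_left fun _ ↦ by ring

end RowSum

theorem double_sum_log_limit_general {b : ℤ → ℝ} {c p x : ℝ}
    (hb : Tendsto (fun m : ℕ ↦ (m : ℝ) * b m) atTop (𝓝 c)) (hp : -1 < p) (hx : 0 < x) :
    Tendsto (fun d : ℝ ↦
        (1 / (d * Real.log d)) *
          ∑ j ∈ Finset.Icc 3 ⌊d * x⌋₊, ∑ k ∈ Finset.Icc 1 (j - 2),
            ((k : ℝ) / (j : ℝ)) ^ p * b ((j : ℤ) - k))
      atTop (𝓝 (c * x)) := by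
  refine (tendsto_comp_natFloor_mul_div_mul_log hx <|
    isLittleO_sum_range_succ_sub_mul_log (isLittleO_rowSum_sub_log hb hp)).congr fun d ↦ ?_
  rw [← sum_Icc_three_rowSum]
  rfl

/-- for `β ∈ [3/4, 1)` and `x > 0`,
`lim_{d→∞} (1/(d ln d)) Σ_{j=3}^{⌊dx⌋} Σ_{k=1}^{j−2} (k/j)^{2β−3/2} a_{3/2}(j−k)² = 9x/64`. -/
theorem double_sum_log_limit (β x : ℝ) (hβ1 : 3 / 4 ≤ β) (hβ2 : β < 1) (hx : 0 < x) :
    Tendsto (fun d : ℕ =>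
        (1 / ((d : ℝ) * Real.log d)) *
          ∑ j ∈ Finset.Icc 3 ⌊(d : ℝ) * x⌋₊, ∑ k ∈ Finset.Icc 1 (j - 2),
            ((k : ℝ) / (j : ℝ)) ^ (2 * β - 3 / 2) * aFun (3 / 2) ((j : ℤ) - k) ^ 2)
      atTop (nhds (9 * x / 64)) := by
  rw [← div_mul_eq_mul_div]
  exact (double_sum_log_limit_general (b := fun m ↦ aFun (3 / 2) m ^ 2)
    tendsto_mul_aFun_three_halves_sq (by linarith) hx).comp tendsto_natCast_atTop_atTop
end

section
/- Let 0 < α < 2. Then there exists a constant C > 0 such that for all integers d ≥ 2: d^{−1} (Σ_{m=−d+1}^{d−1} |a_α(m)|^{4/3})³ ≤ C d^{−1} if 0 < α < 5/4; d^{−1} (Σ_{m=−d+1}^{d−1} |a_α(m)|^{4/3})³ ≤ C d^{−1} (ln d)³ if α = 5/4; and d^{−1} (Σ_{m=−d+1}^{d−1} |a_α(m)|^{4/3})³ ≤ C d^{4α−6} if 5/4 < α < 2. -/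
/-!
Since `aFun α m` is half the second difference of `x ↦ |x| ^ α` at `m`, applying the mean value
theorem twice shows that for `m ≥ 2` it equals `α (α - 1) / 2 * c ^ (α - 2)` with `|c - m| < 1`,
so it is `O(m ^ (α - 2))`. The sum of the `4/3`-powers is therefore bounded by a multiple of
`∑ k ≤ d, k ^ (4 / 3 * (α - 2))`, whose growth changes where the exponent crosses `-1`, that is at
`α = 5 / 4`.
-/

open Filter Asymptotics Finset

theorem exists_hasDerivAt_eq_second_difference {f f' f'' : ℝ → ℝ} {x h : ℝ} (hh : 0 < h)
    (hfc : ContinuousOn f (Set.Icc (x - h) (x + h)))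
    (hf : ∀ y ∈ Set.Ioo (x - h) (x + h), HasDerivAt f (f' y) y)
    (hf' : ∀ y ∈ Set.Ioo (x - h) (x + h), HasDerivAt f' (f'' y) y) :
    ∃ c ∈ Set.Ioo (x - h) (x + h), f (x + h) + f (x - h) - 2 * f x = f'' c * h ^ 2 := by
  have hcont : ContinuousOn (fun y ↦ f (y + h) - f y) (Set.Icc (x - h) x) :=
    (hfc.comp (by fun_prop) fun y hy ↦ ⟨by linarith [hy.1], by linarith [hy.2]⟩).sub
      (hfc.mono fun y hy ↦ ⟨hy.1, by linarith [hy.2]⟩)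
  obtain ⟨b, hb, hb_eq⟩ := exists_hasDerivAt_eq_slope _ (fun y ↦ f' (y + h) - f' y)
    (sub_lt_self x hh) hcont fun y hy ↦
      ((hf (y + h) ⟨by linarith [hy.1], by linarith [hy.2]⟩).comp_add_const y h).sub
        (hf y ⟨hy.1, by linarith [hy.2]⟩)
  have hderiv : ∀ y ∈ Set.Icc b (b + h), HasDerivAt f' (f'' y) y := fun y hy ↦
    hf' y ⟨by linarith [hb.1, hy.1], by linarith [hb.2, hy.2]⟩
  obtain ⟨c, hc, hc_eq⟩ := exists_hasDerivAt_eq_slope f' f'' (lt_add_of_pos_right b hh)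
    (HasDerivAt.continuousOn hderiv) fun y hy ↦ hderiv y (Set.Ioo_subset_Icc_self hy)
  refine ⟨c, ⟨by linarith [hb.1, hc.1], by linarith [hb.2, hc.2]⟩, ?_⟩
  rw [sub_sub_cancel, eq_div_iff hh.ne', sub_add_cancel] at hb_eq
  rw [add_sub_cancel_left, eq_div_iff hh.ne'] at hc_eq
  linear_combination -hb_eq - h * hc_eq

theorem exists_rpow_second_difference_eq (α : ℝ) {x h : ℝ} (hh : 0 < h) (hx : h < x) :
    ∃ c ∈ Set.Ioo (x - h) (x + h),
      (x + h) ^ α + (x - h) ^ α - 2 * x ^ α = α * (α - 1) * c ^ (α - 2) * h ^ 2 := by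
  have hne : ∀ y ∈ Set.Icc (x - h) (x + h), y ≠ 0 := fun y hy ↦ by linarith [hy.1]
  have hderiv (p : ℝ) : ∀ y ∈ Set.Icc (x - h) (x + h),
      HasDerivAt (· ^ p) (p * y ^ (p - 1)) y := fun y hy ↦
    Real.hasDerivAt_rpow_const (Or.inl (hne y hy))
  refine exists_hasDerivAt_eq_second_difference hh (HasDerivAt.continuousOn (hderiv α))
    (fun y hy ↦ hderiv α y (Set.Ioo_subset_Icc_self hy)) fun y hy ↦ ?_
  have hderiv₂ := (hderiv (α - 1) y (Set.Ioo_subset_Icc_self hy)).const_mul α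
  rwa [show α - 1 - 1 = α - 2 by ring, ← mul_assoc] at hderiv₂

theorem rpow_le_rpow_abs_mul_rpow {x y c : ℝ} (s : ℝ) (hx : 0 < x) (hc : 0 < c)
    (hxy : x / c ≤ y) (hyx : y ≤ c * x) : y ^ s ≤ c ^ |s| * x ^ s := by
  rcases le_total 0 s with hs | hs
  · have hy : 0 ≤ y := (by positivity : 0 ≤ x / c).trans hxy
    rw [abs_of_nonneg hs, ← Real.mul_rpow hc.le hx.le]
    exact Real.rpow_le_rpow hy hyx hs
  · rw [abs_of_nonpos hs, Real.rpow_neg hc.le, inv_mul_eq_div, ← Real.div_rpow hx.le hc.le]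
    exact Real.rpow_le_rpow_of_nonpos (by positivity) hxy hs

theorem abs_rpow_second_difference_le (α : ℝ) {x h : ℝ} (hh : 0 < h) (hx : 2 * h ≤ x) :
    |(x + h) ^ α + (x - h) ^ α - 2 * x ^ α| ≤
      |α * (α - 1)| * 2 ^ |α - 2| * x ^ (α - 2) * h ^ 2 := by
  obtain ⟨c, ⟨hxc, hcx⟩, hc_eq⟩ := exists_rpow_second_difference_eq α hh (by linarith : h < x)
  have hc : c ^ (α - 2) ≤ 2 ^ |α - 2| * x ^ (α - 2) :=
    rpow_le_rpow_abs_mul_rpow _ (by linarith) two_pos (by linarith) (by linarith)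
  have hc0 : 0 ≤ c ^ (α - 2) := Real.rpow_nonneg (by linarith) _
  rw [hc_eq, abs_mul, abs_mul, abs_of_nonneg hc0, abs_of_nonneg (sq_nonneg h),
    mul_assoc _ (2 ^ |α - 2|)]
  gcongr

/-- The order of growth of `∑ k ≤ n, k ^ s` as `n → ∞`; in the case `s = -1` it vanishes at
`n = 1`. -/
noncomputable def powerSumOrder (s : ℝ) (n : ℕ) : ℝ :=
  if s < -1 then 1 else if s = -1 then Real.log n else (n : ℝ) ^ (s + 1)

theorem powerSumOrder_of_lt {s : ℝ} (hs : s < -1) (n : ℕ) : powerSumOrder s n = 1 :=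
  if_pos hs

theorem powerSumOrder_neg_one (n : ℕ) : powerSumOrder (-1) n = Real.log n := by
  simp [powerSumOrder]

theorem powerSumOrder_of_gt {s : ℝ} (hs : -1 < s) (n : ℕ) :
    powerSumOrder s n = (n : ℝ) ^ (s + 1) := by
  rw [powerSumOrder, if_neg hs.not_gt, if_neg hs.ne']

theorem powerSumOrder_pos (s : ℝ) {n : ℕ} (hn : 2 ≤ n) : 0 < powerSumOrder s n := by
  have hlog : 0 < Real.log n := Real.log_pos (by exact_mod_cast hn)
  unfold powerSumOrder
  split_ifs <;> positivity

theorem sum_range_add_one_rpow_le_tsum {s : ℝ} (hs : s < -1) (n : ℕ) :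
    ∑ k ∈ range n, ((k : ℝ) + 1) ^ s ≤ ∑' k : ℕ, ((k : ℝ) + 1) ^ s := by
  have hsum : Summable fun k : ℕ ↦ ((k : ℝ) + 1) ^ s := by
    exact_mod_cast (summable_nat_add_iff 1).2 (Real.summable_nat_rpow.2 hs)
  exact hsum.sum_le_tsum _ fun k _ ↦ by positivity

theorem sum_range_add_one_rpow_neg_one_le (n : ℕ) :
    ∑ k ∈ range n, ((k : ℝ) + 1) ^ (-1 : ℝ) ≤ 1 + Real.log n := by
  simpa [harmonic, Real.rpow_neg_one] using harmonic_le_one_add_log n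

theorem mul_rpow_sub_one_mul_le_rpow_sub_rpow {q x y : ℝ} (hq0 : 0 ≤ q) (hq1 : q ≤ 1)
    (hx : 0 ≤ x) (hxy : x < y) : q * y ^ (q - 1) * (y - x) ≤ y ^ q - x ^ q := by
  have hy : 0 < y := hx.trans_lt hxy
  have hslope := (Real.concaveOn_rpow hq0 hq1).le_slope_of_hasDerivAt hx hy.le hxy
    (Real.hasDerivAt_rpow_const (Or.inl hy.ne'))
  rwa [slope_def_field, le_div_iff₀ (sub_pos.2 hxy)] at hslope

theorem sum_range_add_one_rpow_sub_one_le_div {q : ℝ} (hq0 : 0 < q) (hq1 : q ≤ 1) (n : ℕ) :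
    ∑ k ∈ range n, ((k : ℝ) + 1) ^ (q - 1) ≤ (n : ℝ) ^ q / q := by
  rw [le_div_iff₀' hq0, mul_sum]
  calc ∑ k ∈ range n, q * ((k : ℝ) + 1) ^ (q - 1)
      ≤ ∑ k ∈ range n, (((k + 1 : ℕ) : ℝ) ^ q - (k : ℝ) ^ q) := by
        refine sum_le_sum fun k _ ↦ ?_
        simpa using mul_rpow_sub_one_mul_le_rpow_sub_rpow hq0.le hq1 k.cast_nonneg (lt_add_one _)
    _ = (n : ℝ) ^ q := by
        rw [sum_range_sub fun k : ℕ ↦ (k : ℝ) ^ q, Nat.cast_zero, Real.zero_rpow hq0.ne', sub_zero]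

theorem sum_range_add_one_rpow_le_of_nonneg {s : ℝ} (hs : 0 ≤ s) (n : ℕ) :
    ∑ k ∈ range n, ((k : ℝ) + 1) ^ s ≤ (n : ℝ) ^ (s + 1) := by
  calc ∑ k ∈ range n, ((k : ℝ) + 1) ^ s
      ≤ ∑ _k ∈ range n, (n : ℝ) ^ s := by
        gcongr with k hk
        exact_mod_cast mem_range.1 hk
    _ = (n : ℝ) ^ (s + 1) := by
        rw [sum_const, card_range, nsmul_eq_mul,
          Real.rpow_add_one' n.cast_nonneg (by positivity), mul_comm]

theorem isBigO_sum_range_add_one_rpow (s : ℝ) :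
    (fun n : ℕ ↦ ∑ k ∈ range n, ((k : ℝ) + 1) ^ s) =O[atTop] powerSumOrder s := by
  have hnonneg (n : ℕ) : 0 ≤ ∑ k ∈ range n, ((k : ℝ) + 1) ^ s := by positivity
  rcases lt_trichotomy s (-1) with hs | rfl | hs
  · simp only [funext (powerSumOrder_of_lt hs)]
    refine .of_bound (∑' k : ℕ, ((k : ℝ) + 1) ^ s) (.of_forall fun n ↦ ?_)
    rw [norm_one, mul_one, Real.norm_of_nonneg (hnonneg n)]
    exact sum_range_add_one_rpow_le_tsum hs n
  · simp only [funext powerSumOrder_neg_one]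
    have hlog : (fun n : ℕ ↦ 1 + Real.log n) =O[atTop] fun n : ℕ ↦ Real.log n :=
      Real.isLittleO_const_log_atTop.natCast_atTop.isBigO.add (isBigO_refl _ _)
    refine .trans (.of_norm_le fun n ↦ ?_) hlog
    rw [Real.norm_of_nonneg (hnonneg n)]
    exact sum_range_add_one_rpow_neg_one_le n
  · simp only [funext (powerSumOrder_of_gt hs)]
    rcases le_total 0 s with hs0 | hs0
    · refine .of_norm_le fun n ↦ ?_
      rw [Real.norm_of_nonneg (hnonneg n)]
      exact sum_range_add_one_rpow_le_of_nonneg hs0 n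
    · refine .trans (.of_norm_le fun n ↦ ?_)
        (isBigO_const_mul_self (s + 1)⁻¹ (fun n : ℕ ↦ (n : ℝ) ^ (s + 1)) atTop)
      rw [Real.norm_of_nonneg (hnonneg n), inv_mul_eq_div]
      simpa using sum_range_add_one_rpow_sub_one_le_div (q := s + 1) (by linarith) (by linarith) n

theorem one_le_sum_range_succ_add_one_rpow (s : ℝ) (n : ℕ) :
    1 ≤ ∑ k ∈ range (n + 1), ((k : ℝ) + 1) ^ s := by
  have hnonneg : 0 ≤ ∑ k ∈ range n, (((k + 1 : ℕ) : ℝ) + 1) ^ s := by positivity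
  simpa [sum_range_succ'] using hnonneg

theorem aFun_even (α : ℝ) : (aFun α).Even := fun m ↦ by
  have hadd : |((-m : ℤ) : ℝ) + 1| = |(m : ℝ) - 1| := by
    rw [← abs_neg]; push_cast; ring_nf
  have hsub : |((-m : ℤ) : ℝ) - 1| = |(m : ℝ) + 1| := by
    rw [← abs_neg]; push_cast; ring_nf
  rw [aFun, aFun, hadd, hsub, Int.cast_neg, abs_neg, add_comm (|(m : ℝ) - 1| ^ α)]

theorem aFun_zero {α : ℝ} (hα : α ≠ 0) : aFun α 0 = 1 := by
  simp [aFun, Real.zero_rpow hα]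

theorem isBigO_aFun (α : ℝ) :
    (fun n : ℕ ↦ aFun α n) =O[atTop] fun n : ℕ ↦ (n : ℝ) ^ (α - 2) := by
  refine .of_bound (|α * (α - 1)| * 2 ^ |α - 2| / 2) ?_
  filter_upwards [eventually_ge_atTop 2] with n hn
  have hn' : (2 : ℝ) ≤ n := by exact_mod_cast hn
  rw [aFun, Int.cast_natCast, abs_of_nonneg (by linarith : 0 ≤ (n : ℝ) + 1),
    abs_of_nonneg (by linarith : 0 ≤ (n : ℝ) - 1), Nat.abs_cast, Real.norm_eq_abs, abs_div, abs_two,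
    Real.norm_of_nonneg (by positivity), div_mul_eq_mul_div]
  gcongr
  simpa using abs_rpow_second_difference_le α one_pos (by linarith : 2 * 1 ≤ (n : ℝ))

theorem sum_Icc_rpow_abs_aFun {α : ℝ} (hα : α ≠ 0) (p : ℝ) (n : ℕ) :
    ∑ m ∈ Icc (-(n : ℤ)) n, |aFun α m| ^ p =
      1 + 2 * ∑ k ∈ range n, |aFun α ((k + 1 : ℕ) : ℤ)| ^ p := by
  have heven : (fun m ↦ |aFun α m| ^ p).Even := fun m ↦ by simp only [aFun_even α m]
  rw [sum_Icc_of_even_eq_range heven, sum_range_succ']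
  simp only [Nat.cast_zero, aFun_zero hα, abs_one, Real.one_rpow, nsmul_eq_mul, Nat.cast_ofNat]
  ring

theorem exists_abs_aFun_le (α : ℝ) :
    ∃ C : ℝ, 0 < C ∧ ∀ n : ℕ, |aFun α ((n + 1 : ℕ) : ℤ)| ≤ C * ((n : ℝ) + 1) ^ (α - 2) := by
  obtain ⟨C, hC0, hC⟩ := bound_of_isBigO_nat_atTop (isBigO_aFun α)
  refine ⟨C, hC0, fun n ↦ ?_⟩
  have hpos : 0 < ((n + 1 : ℕ) : ℝ) ^ (α - 2) := by positivity
  have hbound := hC hpos.ne'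
  rwa [Real.norm_of_nonneg hpos.le, Real.norm_eq_abs, Nat.cast_add_one (R := ℝ)] at hbound

theorem exists_sum_rpow_abs_aFun_le (α : ℝ) {p : ℝ} (hp : 0 ≤ p) : ∃ K : ℝ, 0 < K ∧ ∀ n : ℕ,
    ∑ k ∈ range n, |aFun α ((k + 1 : ℕ) : ℤ)| ^ p ≤
      K * ∑ k ∈ range n, ((k : ℝ) + 1) ^ (p * (α - 2)) := by
  obtain ⟨C, hC0, hC⟩ := exists_abs_aFun_le α
  refine ⟨C ^ p, by positivity, fun n ↦ ?_⟩
  rw [mul_sum]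
  refine sum_le_sum fun k _ ↦ ?_
  calc |aFun α ((k + 1 : ℕ) : ℤ)| ^ p
      ≤ (C * ((k : ℝ) + 1) ^ (α - 2)) ^ p := by gcongr; exact hC k
    _ = C ^ p * ((k : ℝ) + 1) ^ (p * (α - 2)) := by
        rw [Real.mul_rpow hC0.le (by positivity), ← Real.rpow_mul (by positivity), mul_comm (α - 2)]

theorem exists_sum_Icc_rpow_abs_aFun_le {α p : ℝ} (hα : α ≠ 0) (hp : 0 ≤ p) :
    ∃ K : ℝ, ∀ n : ℕ, ∑ m ∈ Icc (-(n : ℤ)) n, |aFun α m| ^ p ≤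
      K * ∑ k ∈ range (n + 1), ((k : ℝ) + 1) ^ (p * (α - 2)) := by
  obtain ⟨K, hK0, hK⟩ := exists_sum_rpow_abs_aFun_le α hp
  refine ⟨1 + 2 * K, fun n ↦ ?_⟩
  have hone := one_le_sum_range_succ_add_one_rpow (p * (α - 2)) n
  have hmono : ∑ k ∈ range n, ((k : ℝ) + 1) ^ (p * (α - 2)) ≤
      ∑ k ∈ range (n + 1), ((k : ℝ) + 1) ^ (p * (α - 2)) :=
    sum_le_sum_of_subset_of_nonneg (range_subset_range.2 n.le_succ) fun k _ _ ↦ by positivity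
  rw [sum_Icc_rpow_abs_aFun hα]
  linarith [hK n, mul_le_mul_of_nonneg_left hmono hK0.le]

theorem isBigO_sum_Icc_rpow_abs_aFun {α p : ℝ} (hα : α ≠ 0) (hp : 0 ≤ p) :
    (fun d : ℕ ↦ ∑ m ∈ Icc (-(d : ℤ) + 1) ((d : ℤ) - 1), |aFun α m| ^ p)
      =O[atTop] powerSumOrder (p * (α - 2)) := by
  obtain ⟨K, hK⟩ := exists_sum_Icc_rpow_abs_aFun_le hα hp
  refine IsBigO.trans (.of_bound K ?_) (isBigO_sum_range_add_one_rpow _)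
  filter_upwards [eventually_ge_atTop 1] with d hd
  obtain ⟨n, rfl⟩ := Nat.exists_eq_add_of_le' hd
  have hbounds : -((n + 1 : ℕ) : ℤ) + 1 = -n ∧ ((n + 1 : ℕ) : ℤ) - 1 = n := by omega
  rw [hbounds.1, hbounds.2, Real.norm_of_nonneg (by positivity),
    Real.norm_of_nonneg (by positivity)]
  exact hK n

theorem aFun_power_sum_bound_general (α : ℝ) (hα0 : 0 < α) :
    ∃ C : ℝ, 0 < C ∧ ∀ d : ℕ, 2 ≤ d →
      (α < 5 / 4 →
        (d : ℝ)⁻¹ * (∑ m ∈ Finset.Icc (-(d : ℤ) + 1) ((d : ℤ) - 1),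
            |aFun α m| ^ ((4 : ℝ) / 3)) ^ 3 ≤ C * (d : ℝ)⁻¹) ∧
      (α = 5 / 4 →
        (d : ℝ)⁻¹ * (∑ m ∈ Finset.Icc (-(d : ℤ) + 1) ((d : ℤ) - 1),
            |aFun α m| ^ ((4 : ℝ) / 3)) ^ 3 ≤ C * (d : ℝ)⁻¹ * Real.log d ^ 3) ∧
      (5 / 4 < α →
        (d : ℝ)⁻¹ * (∑ m ∈ Finset.Icc (-(d : ℤ) + 1) ((d : ℤ) - 1),
            |aFun α m| ^ ((4 : ℝ) / 3)) ^ 3 ≤ C * (d : ℝ) ^ (4 * α - 6)) := by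
  obtain ⟨C, hC0, hC⟩ := bound_of_isBigO_nat_atTop
    (isBigO_sum_Icc_rpow_abs_aFun hα0.ne' (p := 4 / 3) (by norm_num))
  refine ⟨C ^ 3, by positivity, fun d hd ↦ ?_⟩
  set S := ∑ m ∈ Icc (-(d : ℤ) + 1) ((d : ℤ) - 1), |aFun α m| ^ ((4 : ℝ) / 3)
  have hS0 : 0 ≤ S := by positivity
  have hd0 : (0 : ℝ) < d := by positivity
  have hbound : (d : ℝ)⁻¹ * S ^ 3 ≤ C ^ 3 * (d : ℝ)⁻¹ * powerSumOrder (4 / 3 * (α - 2)) d ^ 3 := by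
    have horder := powerSumOrder_pos (4 / 3 * (α - 2)) hd
    have hS : ‖S‖ ≤ C * ‖powerSumOrder (4 / 3 * (α - 2)) d‖ := hC horder.ne'
    rw [Real.norm_of_nonneg hS0, Real.norm_of_nonneg horder.le] at hS
    rw [mul_right_comm, ← mul_pow, mul_comm]
    gcongr
  refine ⟨fun h ↦ ?_, fun h ↦ ?_, fun h ↦ ?_⟩
  · rwa [powerSumOrder_of_lt (by linarith), one_pow, mul_one] at hbound
  · rwa [show 4 / 3 * (α - 2) = -1 by linarith, powerSumOrder_neg_one] at hbound
  · have hpow : (d : ℝ) ^ (4 * α - 6) = (d : ℝ)⁻¹ * ((d : ℝ) ^ (4 / 3 * (α - 2) + 1)) ^ 3 := by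
      rw [← Real.rpow_mul_natCast hd0.le, ← Real.rpow_neg_one, ← Real.rpow_add hd0]
      ring_nf
    rwa [powerSumOrder_of_gt (by linarith), mul_assoc, ← hpow] at hbound

/-- for `0 < α < 2` there exists `C > 0` such that for all `d ≥ 2`,
`d^{−1} (Σ_{m=−d+1}^{d−1} |a_α(m)|^{4/3})³` is bounded by `C d^{−1}` if `α < 5/4`,
by `C d^{−1} (ln d)³` if `α = 5/4`, and by `C d^{4α−6}` if `5/4 < α < 2`. -/
theorem aFun_power_sum_bound (α : ℝ) (hα0 : 0 < α) (hα2 : α < 2) :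
    ∃ C : ℝ, 0 < C ∧ ∀ d : ℕ, 2 ≤ d →
      (α < 5 / 4 →
        (d : ℝ)⁻¹ * (∑ m ∈ Finset.Icc (-(d : ℤ) + 1) ((d : ℤ) - 1),
            |aFun α m| ^ ((4 : ℝ) / 3)) ^ 3 ≤ C * (d : ℝ)⁻¹) ∧
      (α = 5 / 4 →
        (d : ℝ)⁻¹ * (∑ m ∈ Finset.Icc (-(d : ℤ) + 1) ((d : ℤ) - 1),
            |aFun α m| ^ ((4 : ℝ) / 3)) ^ 3 ≤ C * (d : ℝ)⁻¹ * Real.log d ^ 3) ∧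
      (5 / 4 < α →
        (d : ℝ)⁻¹ * (∑ m ∈ Finset.Icc (-(d : ℤ) + 1) ((d : ℤ) - 1),
            |aFun α m| ^ ((4 : ℝ) / 3)) ^ 3 ≤ C * (d : ℝ) ^ (4 * α - 6)) :=
  aFun_power_sum_bound_general α hα0
end
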